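/- Let m ≥ 3 be an integer and 2 ≤ p < ∞. There is a constant C (depending on m and p) such that for every locally absolutely continuous z : (0,∞) → ℂ with ‖z‖_X < ∞, with z' and z/ρ in L^p(ρ dρ), and satisfying the orthogonality condition ∫₀^∞ z(ρ) h₁(ρ) ρ dρ = 0, one has ‖ |z'| + |z|/ρ ‖_{L^p(ρ dρ)} ≤ C ‖L₀ z‖_{L^p(ρ dρ)}. -/

import Mathlib

open MeasureTheory Set Real Filter
open scoped ENNReal

noncomputable section

abbrev V3 := Fin 3 → ℝ
abbrev V2 := Fin 2 → ℝ

/-- cross product in ℝ³ -/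
def cross3 (a b : V3) : V3 :=
  ![a 1 * b 2 - a 2 * b 1, a 2 * b 0 - a 0 * b 2, a 0 * b 1 - a 1 * b 0]

/-- dot product in ℝ³ -/
def dot3 (a b : V3) : ℝ := a 0 * b 0 + a 1 * b 1 + a 2 * b 2

/-- squared euclidean norm in ℝ³ -/
def nsq3 (a : V3) : ℝ := a 0 ^ 2 + a 1 ^ 2 + a 2 ^ 2

/-- the generator R of rotations about the x₃-axis -/
def Rv (a : V3) : V3 := ![-a 1, a 0, 0]

/-- the rotation e^{αR} about the x₃-axis -/
def rotZ (α : ℝ) (a : V3) : V3 :=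
  ![Real.cos α * a 0 - Real.sin α * a 1, Real.sin α * a 0 + Real.cos α * a 1, a 2]

def kHat : V3 := ![0, 0, 1]
def negkHat : V3 := ![0, 0, -1]
def jHat : V3 := ![0, 1, 0]

/-- first component of the harmonic map profile -/
def h1f (m : ℕ) (r : ℝ) : ℝ := 2 / (r ^ (m : ℤ) + r ^ (-(m : ℤ)))

/-- third component of the harmonic map profile -/
def h3f (m : ℕ) (r : ℝ) : ℝ := (r ^ (m : ℤ) - r ^ (-(m : ℤ))) / (r ^ (m : ℤ) + r ^ (-(m : ℤ)))

/-- the harmonic map profile h -/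
def hProf (m : ℕ) (r : ℝ) : V3 := ![h1f m r, 0, h3f m r]

/-- the r-derivative of the harmonic map profile -/
def dhProf (m : ℕ) (r : ℝ) : V3 :=
  ![-((m : ℝ) / r) * h1f m r * h3f m r, 0, ((m : ℝ) / r) * (h1f m r) ^ 2]

/-- profile of the harmonic map e^{(mθ+α)R} h(r/s) -/
def harmP (m : ℕ) (s α : ℝ) (r : ℝ) : V3 := rotZ α (hProf m (r / s))

/-- its r-derivative -/
def dharmP (m : ℕ) (s α : ℝ) (r : ℝ) : V3 := fun i => (1 / s) * rotZ α (dhProf m (r / s)) i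

/-- `v` is locally absolutely continuous on (0,∞), with a.e. derivative `dv`. -/
def LocAC (v dv : ℝ → V3) : Prop :=
  (∀ a b : ℝ, 0 < a → a ≤ b → ∀ i, IntervalIntegrable (fun r => dv r i) volume a b) ∧
  (∀ a b : ℝ, 0 < a → a ≤ b → ∀ i, v b i - v a i = ∫ r in a..b, dv r i)

/-- energy density (w.r.t. dr) of the m-equivariant map with profile (v,dv) -/
def eDen (m : ℕ) (v dv : ℝ → V3) (r : ℝ) : ℝ :=
  (nsq3 (dv r) + ((m : ℝ) ^ 2 / r ^ 2) * ((v r 0) ^ 2 + (v r 1) ^ 2)) * r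

/-- the energy E(u) = (1/2)∫|∇u|² of the m-equivariant map with profile (v,dv) -/
def energy (m : ℕ) (v dv : ℝ → V3) : ℝ := π * ∫ r in Ioi (0:ℝ), eDen m v dv r

/-- membership in the class Σ_m, expressed in terms of the profile (v,dv) -/
def InSigma (m : ℕ) (v dv : ℝ → V3) : Prop :=
  LocAC v dv ∧ (∀ r ∈ Ioi (0:ℝ), nsq3 (v r) = 1) ∧
  IntegrableOn (eDen m v dv) (Ioi (0:ℝ)) ∧
  Tendsto v (nhdsWithin 0 (Ioi 0)) (nhds negkHat) ∧
  Tendsto v atTop (nhds kHat)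

/-- squared Ḣ¹(ℝ²) distance between the m-equivariant maps with profiles (v,dv), (w,dw) -/
def dH1sq (m : ℕ) (v dv w dw : ℝ → V3) : ℝ :=
  2 * π * ∫ r in Ioi (0:ℝ),
    (nsq3 (fun i => dv r i - dw r i)
      + ((m : ℝ) ^ 2 / r ^ 2) * ((v r 0 - w r 0) ^ 2 + (v r 1 - w r 1) ^ 2)) * r

/-- Ḣ¹(ℝ²) distance -/
def dH1 (m : ℕ) (v dv w dw : ℝ → V3) : ℝ := Real.sqrt (dH1sq m v dv w dw)

/-- the polar angle of a point of ℝ² -/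
def angleOf (x : V2) : ℝ := Complex.arg ⟨x 0, x 1⟩

/-- the radius of a point of ℝ² -/
def radOf (x : V2) : ℝ := Real.sqrt ((x 0) ^ 2 + (x 1) ^ 2)

/-- the m-equivariant map u(r,θ) = e^{mθR} v(r) -/
def eqMap (m : ℕ) (v : ℝ → V3) (x : V2) : V3 := rotZ ((m : ℝ) * angleOf x) (v (radOf x))

/-- the spatial gradient ∂_j u of the m-equivariant map with profile (v,dv) -/
def eqGrad (m : ℕ) (v dv : ℝ → V3) (x : V2) (j : Fin 2) : V3 :=
  rotZ ((m : ℝ) * angleOf x) (fun i =>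
    (x j / radOf x) * dv (radOf x) i
      + ((m : ℝ) * (if j = 0 then -(x 1) else x 0) / radOf x ^ 2) * Rv (v (radOf x)) i)

/-- weak (distributional) form of the Schrödinger map equation ∂ₜu = u × Δu on the time
interval I, for the m-equivariant map with time-dependent profile (v,dv):
∫∫ { u·φ_t - Σ_j (u × ∂_j u)·∂_j φ } dx dt = 0 for all C¹ compactly supported φ. -/
def WeakSM (m : ℕ) (I : Set ℝ) (v dv : ℝ → ℝ → V3) : Prop :=
  ∀ φ : ℝ → V2 → V3,
    (∀ i, ContDiff ℝ 1 (fun q : ℝ × V2 => φ q.1 q.2 i)) →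
    (∀ i, HasCompactSupport (fun q : ℝ × V2 => φ q.1 q.2 i)) →
    (∀ t, t ∉ interior I → ∀ x, φ t x = 0) →
    (∫ t in I, ∫ x : V2,
      (dot3 (eqMap m (v t) x) (fun i => deriv (fun τ => φ τ x i) t)
        - ∑ j : Fin 2, dot3 (cross3 (eqMap m (v t) x) (eqGrad m (v t) (dv t) x j))
            (fun i => fderiv ℝ (fun y => φ t y i) x (Pi.single j 1)))) = 0

/-- continuity in t of the map t ↦ u(t) with respect to the Ḣ¹ distance, on I -/
def H1Cont (m : ℕ) (I : Set ℝ) (v dv : ℝ → ℝ → V3) : Prop :=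
  ∀ t₀ ∈ I, ∀ ε > (0:ℝ), ∃ η > (0:ℝ), ∀ t ∈ I, |t - t₀| < η →
    dH1 m (v t) (dv t) (v t₀) (dv t₀) < ε

/-- a weak solution of the Schrödinger map equation in the class C(I; Σ_m), with
initial profile v₀ -/
def SolClass (m : ℕ) (I : Set ℝ) (v dv : ℝ → ℝ → V3) (v₀ : ℝ → V3) : Prop :=
  (∀ r ∈ Ioi (0:ℝ), v 0 r = v₀ r) ∧ WeakSM m I v dv ∧
  (∀ t ∈ I, InSigma m (v t) (dv t)) ∧ H1Cont m I v dv

/-- the profile of Δu for the m-equivariant map u with profile (v,dv,ddv):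
Δu = e^{mθR}( v_rr + v_r/r + (m²/r²) R² v ) -/
def lapP (m : ℕ) (v dv ddv : ℝ → V3) (r : ℝ) : V3 := fun i =>
  ddv r i + dv r i / r + ((m : ℝ) ^ 2 / r ^ 2) * (![-(v r 0), -(v r 1), 0] : V3) i

/-- squared Ḣ² distance (via the Laplacian) -/
def dH2sq (m : ℕ) (v dv ddv w dw ddw : ℝ → V3) : ℝ :=
  2 * π * ∫ r in Ioi (0:ℝ), nsq3 (fun i => lapP m v dv ddv r i - lapP m w dw ddw r i) * r

/-- `z` is locally absolutely continuous on (0,∞), with a.e. derivative `dz`. -/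
def LocACC (z dz : ℝ → ℂ) : Prop :=
  (∀ a b : ℝ, 0 < a → a ≤ b → IntervalIntegrable dz volume a b) ∧
  (∀ a b : ℝ, 0 < a → a ≤ b → z b - z a = ∫ ρ in a..b, dz ρ)

/-- the density (w.r.t. dρ) of the squared X-norm: (|z'|² + |z|²/ρ²) ρ -/
def xDen (z dz : ℝ → ℂ) (ρ : ℝ) : ℝ := (‖dz ρ‖ ^ 2 + ‖z ρ‖ ^ 2 / ρ ^ 2) * ρ

/-- the X-norm ‖z‖_X = (∫ (|z'|² + |z|²/ρ²) ρ dρ)^{1/2} -/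
def normX (z dz : ℝ → ℂ) : ℝ := Real.sqrt (∫ ρ in Ioi (0:ℝ), xDen z dz ρ)

/-- the operator L₀ = ∂_ρ + (m/ρ) h₃(ρ) -/
def L0op (m : ℕ) (z dz : ℝ → ℂ) (ρ : ℝ) : ℂ :=
  dz ρ + ((((m : ℝ) / ρ) * h3f m ρ : ℝ) : ℂ) * z ρ

/-- **Schur test** in `L^p` for a nonnegative kernel with a weight function. -/
theorem lintegral_rpow_le_of_schur_test {α : Type*} [MeasurableSpace α] {ν : Measure α} [SFinite ν]
    {p q : ℝ} (hpq : p.HolderConjugate q) {k : α → α → ℝ≥0∞}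
    (hk : Measurable (Function.uncurry k)) {u : α → ℝ≥0∞} (hu : Measurable u)
    (hu_ne : ∀ᵐ y ∂ν, u y ≠ 0 ∧ u y ≠ ∞) {A B : ℝ≥0∞}
    (hA : ∀ᵐ x ∂ν, ∫⁻ y, k x y * u y ^ q ∂ν ≤ A * u x ^ q)
    (hB : ∀ᵐ y ∂ν, ∫⁻ x, k x y * u x ^ p ∂ν ≤ B * u y ^ p)
    {g : α → ℝ≥0∞} (hg : AEMeasurable g ν) :
    ∫⁻ x, (∫⁻ y, k x y * g y ∂ν) ^ p ∂ν ≤ A ^ (p / q) * B * ∫⁻ y, g y ^ p ∂ν := by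
  have hp := hpq.pos
  have hq := hpq.symm.pos
  have holder : ∀ᵐ x ∂ν, (∫⁻ y, k x y * g y ∂ν) ^ p ≤
      ∫⁻ y, A ^ (p / q) * (u x ^ p * (k x y * (g y * (u y)⁻¹) ^ p)) ∂ν := by
    filter_upwards [hA] with x hAx
    have hkx : Measurable (k x) := hk.of_uncurry_left
    have h1 : ∫⁻ y, k x y * g y ∂ν ≤
        (A * u x ^ q) ^ (1 / q) * (∫⁻ y, k x y * (g y * (u y)⁻¹) ^ p ∂ν) ^ (1 / p) := by
      calc ∫⁻ y, k x y * g y ∂ν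
          = ∫⁻ y, ((fun y => k x y ^ (1 / q) * u y) *
              (fun y => k x y ^ (1 / p) * (g y * (u y)⁻¹))) y ∂ν := by
            refine lintegral_congr_ae ?_
            filter_upwards [hu_ne] with y hy
            have e1 : k x y ^ (1 / q) * k x y ^ (1 / p) = k x y := by
              rw [← ENNReal.rpow_add_of_nonneg _ _ (by positivity) (by positivity)]
              have : 1 / q + 1 / p = 1 := by
                have := hpq.symm.inv_add_inv_eq_one
                simpa [one_div] using this
              rw [this, ENNReal.rpow_one]
            have e2 : u y * (u y)⁻¹ = 1 := ENNReal.mul_inv_cancel hy.1 hy.2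
            calc k x y * g y = (k x y ^ (1 / q) * k x y ^ (1 / p)) * g y * (u y * (u y)⁻¹) := by
                  rw [e1, e2, mul_one]
              _ = _ := by simp only [Pi.mul_apply]; ring
        _ ≤ _ := ENNReal.lintegral_mul_le_Lp_mul_Lq ν hpq.symm (by fun_prop) (by fun_prop)
        _ = (∫⁻ y, k x y * u y ^ q ∂ν) ^ (1 / q) *
              (∫⁻ y, k x y * (g y * (u y)⁻¹) ^ p ∂ν) ^ (1 / p) := by
            congr 3 <;> · ext y
                          rw [ENNReal.mul_rpow_of_nonneg _ _ (by positivity), ← ENNReal.rpow_mul,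
                            one_div_mul_cancel (by positivity), ENNReal.rpow_one]
        _ ≤ _ := by gcongr
    calc (∫⁻ y, k x y * g y ∂ν) ^ p
        ≤ ((A * u x ^ q) ^ (1 / q) * (∫⁻ y, k x y * (g y * (u y)⁻¹) ^ p ∂ν) ^ (1 / p)) ^ p := by
          gcongr
      _ = A ^ (p / q) * (u x ^ p * ∫⁻ y, k x y * (g y * (u y)⁻¹) ^ p ∂ν) := by
          rw [ENNReal.mul_rpow_of_nonneg _ _ hp.le, ← ENNReal.rpow_mul, ← ENNReal.rpow_mul,
            one_div_mul_cancel hp.ne', ENNReal.rpow_one,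
            ENNReal.mul_rpow_of_nonneg _ _ (by positivity), ← ENNReal.rpow_mul, mul_assoc,
            show q * (1 / q * p) = p by field_simp, one_div_mul_eq_div]
      _ = _ := by
          rw [lintegral_const_mul'' _ (by fun_prop), lintegral_const_mul'' _ (by fun_prop)]
  have hmeas : AEMeasurable (Function.uncurry fun x y =>
      A ^ (p / q) * (u x ^ p * (k x y * (g y * (u y)⁻¹) ^ p))) (ν.prod ν) := by
    have hg2 : AEMeasurable (fun z : α × α => g z.2) (ν.prod ν) := hg.comp_snd
    have hk2 : Measurable (fun z : α × α => k z.1 z.2) := hk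
    simp only [Function.uncurry_def]
    fun_prop
  calc ∫⁻ x, (∫⁻ y, k x y * g y ∂ν) ^ p ∂ν
      ≤ ∫⁻ x, ∫⁻ y, A ^ (p / q) * (u x ^ p * (k x y * (g y * (u y)⁻¹) ^ p)) ∂ν ∂ν :=
        lintegral_mono_ae holder
    _ = ∫⁻ y, ∫⁻ x, A ^ (p / q) * (u x ^ p * (k x y * (g y * (u y)⁻¹) ^ p)) ∂ν ∂ν :=
        lintegral_lintegral_swap hmeas
    _ ≤ ∫⁻ y, A ^ (p / q) * B * g y ^ p ∂ν := by
        refine lintegral_mono_ae ?_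
        filter_upwards [hB, hu_ne] with y hy hune
        have hky : Measurable fun x => k x y := hk.of_uncurry_right
        calc ∫⁻ x, A ^ (p / q) * (u x ^ p * (k x y * (g y * (u y)⁻¹) ^ p)) ∂ν
            = ∫⁻ x, (A ^ (p / q) * (g y * (u y)⁻¹) ^ p) * (k x y * u x ^ p) ∂ν := by
              refine lintegral_congr fun x => ?_
              ring
          _ = (A ^ (p / q) * (g y * (u y)⁻¹) ^ p) * ∫⁻ x, k x y * u x ^ p ∂ν :=
              lintegral_const_mul _ (by fun_prop)
          _ ≤ (A ^ (p / q) * (g y * (u y)⁻¹) ^ p) * (B * u y ^ p) := by gcongr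
          _ = A ^ (p / q) * B * (g y * ((u y)⁻¹ * u y)) ^ p := by
              rw [← mul_assoc (g y), ENNReal.mul_rpow_of_nonneg _ (u y) hp.le]; ring
          _ = _ := by rw [ENNReal.inv_mul_cancel hune.1 hune.2, mul_one]
    _ = _ := lintegral_const_mul'' _ (by fun_prop)

/-- The measure `ρ dρ` on the half-line `(0, ∞)`. -/
def radialMeasure : Measure ℝ :=
  (volume.restrict (Ioi (0:ℝ))).withDensity fun t => ENNReal.ofReal t

instance : SFinite radialMeasure := by unfold radialMeasure; infer_instance

theorem lintegral_radialMeasure {g : ℝ → ℝ≥0∞} (hg : AEMeasurable g (volume.restrict (Ioi 0))) :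
    ∫⁻ t, g t ∂radialMeasure = ∫⁻ t in Ioi (0:ℝ), ENNReal.ofReal t * g t :=
  lintegral_withDensity_eq_lintegral_mul₀ (by fun_prop) hg

theorem ae_radialMeasure_pos : ∀ᵐ t ∂radialMeasure, 0 < t :=
  (withDensity_absolutelyContinuous _ _).ae_le (ae_restrict_mem measurableSet_Ioi)

theorem aemeasurable_radialMeasure {g : ℝ → ℝ≥0∞}
    (hg : AEMeasurable g (volume.restrict (Ioi 0))) : AEMeasurable g radialMeasure :=
  hg.mono_ac (withDensity_absolutelyContinuous _ _)

theorem lintegral_Ioi_rpow_of_lt {r x : ℝ} (hr : r < -1) (hx : 0 < x) :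
    ∫⁻ y in Ioi x, ENNReal.ofReal (y ^ r) = ENNReal.ofReal (-x ^ (r + 1) / (r + 1)) := by
  rw [← integral_Ioi_rpow_of_lt hr hx,
    ofReal_integral_eq_lintegral_ofReal (integrableOn_Ioi_rpow_of_lt hr hx)]
  filter_upwards [ae_restrict_mem measurableSet_Ioi] with y hy
  exact rpow_nonneg (hx.trans hy).le _

theorem lintegral_hardy_kernel_le {b x : ℝ} (hb : 0 < b) (hb1 : b ≤ 1) (hx : 0 < x) :
    ∫⁻ y, ENNReal.ofReal (1 / max x y ^ 2) * ENNReal.ofReal y ^ (-b) ∂radialMeasure ≤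
      ENNReal.ofReal (1 + 1 / b) * ENNReal.ofReal x ^ (-b) := by
  rw [lintegral_radialMeasure (by fun_prop), ← Ioc_union_Ioi_eq_Ioi hx.le]
  refine (lintegral_union_le _ _ _).trans ?_
  have low : ∫⁻ y in Ioc 0 x, ENNReal.ofReal y *
      (ENNReal.ofReal (1 / max x y ^ 2) * ENNReal.ofReal y ^ (-b)) ≤
      ENNReal.ofReal (x ^ (-b)) := by
    calc _ ≤ ∫⁻ y in Ioc 0 x, ENNReal.ofReal (x ^ (-b) / x) := by
          refine setLIntegral_mono (by fun_prop) fun y hy => ?_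
          rw [ENNReal.ofReal_rpow_of_pos hy.1, ← ENNReal.ofReal_mul (by positivity),
            ← ENNReal.ofReal_mul hy.1.le]
          apply ENNReal.ofReal_le_ofReal
          rw [max_eq_left hy.2]
          have e1 : y * (1 / x ^ 2 * y ^ (-b)) = y ^ (1 - b) / x ^ 2 := by
            rw [sub_eq_add_neg, rpow_add hy.1, rpow_one]; ring
          have e2 : x ^ (-b) / x = x ^ (1 - b) / x ^ 2 := by
            rw [sub_eq_add_neg, rpow_add hx, rpow_one]; field_simp
          rw [e1, e2]
          have := rpow_le_rpow hy.1.le hy.2 (sub_nonneg.2 hb1)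
          gcongr
      _ = _ := by
          rw [setLIntegral_const, Real.volume_Ioc, ← ENNReal.ofReal_mul (by positivity)]
          congr 1; field_simp; ring
  have high : ∫⁻ y in Ioi x, ENNReal.ofReal y *
      (ENNReal.ofReal (1 / max x y ^ 2) * ENNReal.ofReal y ^ (-b)) ≤
      ENNReal.ofReal (x ^ (-b) / b) := by
    calc _ = ∫⁻ y in Ioi x, ENNReal.ofReal (y ^ (-b - 1)) := by
          refine setLIntegral_congr_fun measurableSet_Ioi fun y hy => ?_
          have hxy : x < y := hy
          have hy0 : 0 < y := hx.trans hxy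
          rw [ENNReal.ofReal_rpow_of_pos hy0, ← ENNReal.ofReal_mul (by positivity),
            ← ENNReal.ofReal_mul hy0.le, max_eq_right hxy.le, rpow_sub_one hy0.ne']
          congr 1; field_simp
      _ = ENNReal.ofReal (-x ^ (-b - 1 + 1) / (-b - 1 + 1)) :=
          lintegral_Ioi_rpow_of_lt (by linarith) hx
      _ ≤ _ := by
          apply ENNReal.ofReal_le_ofReal
          rw [sub_add_cancel, neg_div_neg_eq]
  calc _ ≤ ENNReal.ofReal (x ^ (-b)) + ENNReal.ofReal (x ^ (-b) / b) := add_le_add low high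
    _ = _ := by
        rw [ENNReal.ofReal_rpow_of_pos hx, ← ENNReal.ofReal_add (by positivity) (by positivity),
          ← ENNReal.ofReal_mul (by positivity)]
        congr 1; field_simp

/-- Hardy's inequality in `L^p(ρ dρ)` for the kernel `1 / max(ρ, t)²`. -/
theorem exists_hardy_bound {p : ℝ} (hp : 2 ≤ p) :
    ∃ K : ℝ, 0 < K ∧ ∀ g : ℝ → ℝ≥0∞, AEMeasurable g (volume.restrict (Ioi 0)) →
      ∫⁻ x, (∫⁻ y, ENNReal.ofReal (1 / max x y ^ 2) * g y ∂radialMeasure) ^ p ∂radialMeasure ≤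
        ENNReal.ofReal K * ∫⁻ y, g y ^ p ∂radialMeasure := by
  have hp1 : 1 < p := by linarith
  have hpq : p.HolderConjugate (Real.conjExponent p) := Real.HolderConjugate.conjExponent hp1
  set q := Real.conjExponent p with hq
  set b := 1 / (p - 1) with hb
  have hb0 : 0 < b := by have : 0 < p - 1 := by linarith
                         positivity
  have hb1 : b ≤ 1 := by rw [hb, div_le_one (by linarith)]; linarith
  refine ⟨(1 + 1 / b) ^ (p / q) * (1 + 1 / 1), by positivity, fun g hg => ?_⟩
  have hupow : ∀ y r : ℝ, (ENNReal.ofReal y ^ (-(1 / p))) ^ r = ENNReal.ofReal y ^ (-(r / p)) := by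
    intro y r
    rw [← ENNReal.rpow_mul]; congr 1; ring
  have hqp : q / p = b := by
    rw [hq, hb, Real.conjExponent]
    have : p - 1 ≠ 0 := by linarith
    field_simp
  have key := lintegral_rpow_le_of_schur_test (ν := radialMeasure) hpq
    (k := fun x y => ENNReal.ofReal (1 / max x y ^ 2)) (by simp only [Function.uncurry_def]; fun_prop)
    (u := fun y => ENNReal.ofReal y ^ (-(1 / p))) (by fun_prop)
    (A := ENNReal.ofReal (1 + 1 / b)) (B := ENNReal.ofReal (1 + 1 / 1))
    (by
      filter_upwards [ae_radialMeasure_pos] with y hy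
      rw [ENNReal.ofReal_rpow_of_pos hy]
      exact ⟨by simpa using rpow_pos_of_pos hy _, ENNReal.ofReal_ne_top⟩)
    (by
      filter_upwards [ae_radialMeasure_pos] with x hx
      simp only [hupow, hqp]
      exact lintegral_hardy_kernel_le hb0 hb1 hx)
    (by
      filter_upwards [ae_radialMeasure_pos] with y hy
      simp only [hupow, div_self hpq.pos.ne']
      simp only [max_comm _ y]
      exact lintegral_hardy_kernel_le one_pos le_rfl hy)
    (aemeasurable_radialMeasure hg)
  rwa [ENNReal.ofReal_mul (by positivity), ← ENNReal.ofReal_rpow_of_pos (by positivity)]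

/-- Product rule in integrated form: `v` is `C¹` and `y` is an indefinite integral of `f`. -/
theorem mul_sub_mul_eq_integral_of_primitive {y f v v' : ℝ → ℝ} {a b : ℝ} (hab : a ≤ b)
    (hf : IntervalIntegrable f volume a b)
    (hy : ∀ x ∈ Icc a b, y x - y a = ∫ t in a..x, f t)
    (hv : ContDiffOn ℝ 1 v (Icc a b)) (hv' : ∀ x ∈ Icc a b, HasDerivAt v (v' x) x) :
    v b * y b - v a * y a = ∫ x in a..b, (v x * f x + v' x * y x) := by
  have hY : AbsolutelyContinuousOnInterval (fun x => y a + ∫ t in a..x, f t) a b :=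
    (contDiffOn_const (c := y a)).absolutelyContinuousOnInterval.fun_add
      (hf.absolutelyContinuousOnInterval_intervalIntegral left_mem_uIcc)
  have hV : AbsolutelyContinuousOnInterval v a b :=
    ContDiffOn.absolutelyContinuousOnInterval (by rwa [uIcc_of_le hab])
  have key := hV.integral_deriv_mul_eq_sub hY
  have hyY : ∀ x ∈ Icc a b, y a + ∫ t in a..x, f t = y x := fun x hx => by
    rw [← hy x hx]; ring
  rw [hyY b ⟨hab, le_rfl⟩, hyY a ⟨le_rfl, hab⟩] at key
  rw [← key]
  refine intervalIntegral.integral_congr_ae ?_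
  filter_upwards [hf.ae_hasDerivAt_integral] with x hx hxab
  have hxu : x ∈ uIcc a b := uIoc_subset_uIcc hxab
  have hxI : x ∈ Icc a b := by rwa [uIcc_of_le hab] at hxu
  rw [(hv' x hxI).deriv, ((hx hxu a left_mem_uIcc).const_add (y a)).deriv, hyY x hxI]
  ring

theorem LocACC.continuousOn {z dz : ℝ → ℂ} (h : LocACC z dz) : ContinuousOn z (Ioi 0) := by
  intro x hx
  have hx0 : (0:ℝ) < x := hx
  have hint : IntervalIntegrable dz volume (x / 2) (x + 1) :=
    h.1 _ _ (by linarith) (by linarith)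
  have hcont : ContinuousOn (fun t => z (x / 2) + ∫ s in (x / 2)..t, dz s) (Icc (x / 2) (x + 1)) :=
    continuousOn_const.add <| by
      have := intervalIntegral.continuousOn_primitive_interval' hint left_mem_uIcc
      rwa [uIcc_of_le (by linarith)] at this
  have hz : ContinuousOn z (Icc (x / 2) (x + 1)) := hcont.congr fun t ht => by
    simp only [← h.2 _ _ (half_pos hx0) ht.1]; ring
  exact (hz.continuousAt (Icc_mem_nhds (by linarith) (by linarith))).continuousWithinAt

theorem LocACC.aestronglyMeasurable {z dz : ℝ → ℂ} (h : LocACC z dz) :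
    AEStronglyMeasurable dz (volume.restrict (Ioi 0)) := by
  have hU : Ioi (0:ℝ) = ⋃ n : ℕ, Ioc (1 / ((n:ℝ) + 1)) ((n:ℝ) + 1) := by
    ext x
    simp only [mem_Ioi, mem_iUnion, mem_Ioc]
    constructor
    · intro hx
      obtain ⟨n, hn⟩ := exists_nat_gt (max x (1 / x))
      have h1 := (le_max_left x (1 / x)).trans hn.le
      have h2 := (le_max_right x (1 / x)).trans_lt hn
      refine ⟨n, ?_, by linarith⟩
      rw [div_lt_iff₀ (by positivity)]
      rw [div_lt_iff₀ hx] at h2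
      nlinarith
    · rintro ⟨n, hn, -⟩
      exact lt_trans (by positivity) hn
  rw [hU]
  refine AEStronglyMeasurable.iUnion fun n => ?_
  have hn : (1:ℝ) / ((n:ℝ) + 1) ≤ (n:ℝ) + 1 := by
    rw [div_le_iff₀ (by positivity)]
    nlinarith [(Nat.cast_nonneg n : (0:ℝ) ≤ n)]
  exact (h.1 _ _ (by positivity) hn).aestronglyMeasurable

theorem LocACC.smul_sub_smul_eq_integral {z dz : ℝ → ℂ} (h : LocACC z dz) {v v' : ℝ → ℝ} {a b : ℝ}
    (ha : 0 < a) (hab : a ≤ b) (hv : ContDiffOn ℝ 1 v (Icc a b))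
    (hv' : ∀ x ∈ Icc a b, HasDerivAt v (v' x) x) (hv'c : ContinuousOn v' (Icc a b)) :
    v b • z b - v a • z a = ∫ x in a..b, (v x • dz x + v' x • z x) := by
  have hdz := h.1 a b ha hab
  have hz : ContinuousOn z (uIcc a b) := by
    rw [uIcc_of_le hab]
    exact h.continuousOn.mono fun x hx => ha.trans_le hx.1
  have hint : IntervalIntegrable (fun x => v x • dz x + v' x • z x) volume a b := by
    refine (hdz.continuousOn_smul ?_).add (ContinuousOn.intervalIntegrable (.fun_smul ?_ hz))
    · rw [uIcc_of_le hab]; exact hv.continuousOn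
    · rwa [uIcc_of_le hab]
  have component (L : ℂ →L[ℝ] ℝ) :
      L (v b • z b - v a • z a) = L (∫ x in a..b, (v x • dz x + v' x • z x)) := by
    rw [← L.intervalIntegral_comp_comm hint]
    simp only [map_sub, map_add, map_smul, smul_eq_mul]
    refine mul_sub_mul_eq_integral_of_primitive (y := fun x => L (z x)) (f := fun x => L (dz x))
      hab ?_ ?_ hv hv'
    · exact ⟨L.integrable_comp hdz.1, L.integrable_comp hdz.2⟩
    · intro x hx
      have hax := h.1 a x ha hx.1
      rw [L.intervalIntegral_comp_comm hax, ← h.2 a x ha hx.1, map_sub]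
  exact Complex.ext (component Complex.reCLM) (component Complex.imCLM)

/-- The reciprocal of `h₁`. -/
def invH1 (m : ℕ) (r : ℝ) : ℝ := (r ^ m + (r ^ m)⁻¹) / 2

theorem h1f_eq_inv (m : ℕ) (r : ℝ) : h1f m r = (invH1 m r)⁻¹ := by
  simp [h1f, invH1]

theorem invH1_pos (m : ℕ) {r : ℝ} (hr : 0 < r) : 0 < invH1 m r := by
  unfold invH1; positivity

theorem contDiffOn_invH1 (m : ℕ) {s : Set ℝ} (hs : s ⊆ Ioi 0) : ContDiffOn ℝ 1 (invH1 m) s := by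
  unfold invH1
  have h : ContDiffOn ℝ 1 (fun r : ℝ => r ^ m) s := by fun_prop
  exact (h.add (h.inv fun x hx => (pow_pos (hs hx) m).ne')).div_const 2

theorem abs_h3f_le_one (m : ℕ) {r : ℝ} (hr : 0 < r) : |h3f m r| ≤ 1 := by
  have h1 : 0 < r ^ (m:ℤ) := zpow_pos hr _
  have h2 : 0 < r ^ (-(m:ℤ)) := zpow_pos hr _
  rw [h3f, abs_div, abs_of_pos (add_pos h1 h2), div_le_one (add_pos h1 h2), abs_le]
  constructor <;> linarith

theorem continuousOn_h3f (m : ℕ) {s : Set ℝ} (hs : s ⊆ Ioi 0) : ContinuousOn (h3f m) s := by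
  unfold h3f
  have h (n : ℤ) : ContinuousOn (fun r : ℝ => r ^ n) s := fun x hx =>
    (continuousAt_zpow₀ x n (Or.inl (hs hx).ne')).continuousWithinAt
  exact ((h _).sub (h _)).div ((h _).add (h _)) fun x hx =>
    (add_pos (zpow_pos (hs hx) _) (zpow_pos (hs hx) _)).ne'

theorem hasDerivAt_invH1 (m : ℕ) {r : ℝ} (hr : 0 < r) :
    HasDerivAt (invH1 m) (m / r * h3f m r * invH1 m r) r := by
  have h := hasDerivAt_pow m r
  have hrm : 0 < r ^ m := pow_pos hr m
  convert! (h.add (h.inv hrm.ne')).div_const 2 using 1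
  rcases m with _ | k
  · simp [h3f]
  · simp only [h3f, invH1, zpow_neg, zpow_natCast, add_tsub_cancel_right]
    have : r ^ (k + 1) + (r ^ (k + 1))⁻¹ ≠ 0 := by positivity
    field_simp
    ring

theorem LocACC.invH1_smul_sub_eq_integral {z dz : ℝ → ℂ} (h : LocACC z dz) (m : ℕ) {a b : ℝ}
    (ha : 0 < a) (hab : a ≤ b) :
    invH1 m b • z b - invH1 m a • z a = ∫ x in a..b, invH1 m x • L0op m z dz x := by
  have hs : Icc a b ⊆ Ioi 0 := fun x hx => ha.trans_le hx.1
  rw [h.smul_sub_smul_eq_integral ha hab (contDiffOn_invH1 m hs)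
    (fun x hx => hasDerivAt_invH1 m (hs hx))
    (((continuousOn_const.div continuousOn_id fun x hx => (hs hx).ne').mul
      (continuousOn_h3f m hs)).mul (contDiffOn_invH1 m hs).continuousOn)]
  congr 1
  ext x
  simp only [L0op, Complex.real_smul, Complex.ofReal_mul]
  ring

theorem pow_div_two_le_invH1 (m : ℕ) {r : ℝ} (hr : 0 < r) : r ^ m / 2 ≤ invH1 m r := by
  have : 0 < (r ^ m)⁻¹ := by positivity
  unfold invH1; linarith

theorem inv_pow_div_two_le_invH1 (m : ℕ) {r : ℝ} (hr : 0 < r) : (r ^ m)⁻¹ / 2 ≤ invH1 m r := by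
  have : 0 < r ^ m := by positivity
  unfold invH1; linarith

theorem invH1_le_pow (m : ℕ) {r : ℝ} (hr : 1 ≤ r) : invH1 m r ≤ r ^ m := by
  have h1 : 1 ≤ r ^ m := one_le_pow₀ hr
  have := inv_le_one_of_one_le₀ h1
  unfold invH1; linarith

theorem invH1_le_inv_pow (m : ℕ) {r : ℝ} (hr : 0 < r) (hr1 : r ≤ 1) :
    invH1 m r ≤ (r ^ m)⁻¹ := by
  have h1 : r ^ m ≤ 1 := pow_le_one₀ hr.le hr1
  have := one_le_inv_iff₀.2 ⟨pow_pos hr m, h1⟩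
  unfold invH1; linarith

theorem div_two_le_invH1 {m : ℕ} (hm : 1 ≤ m) {r : ℝ} (hr : 0 < r) : r / 2 ≤ invH1 m r := by
  rcases le_total r 1 with h | h
  · have := inv_pow_div_two_le_invH1 m hr
    have := one_le_inv_iff₀.2 ⟨pow_pos hr m, pow_le_one₀ hr.le h⟩
    linarith
  · have := pow_div_two_le_invH1 m hr
    have := le_self_pow₀ h (by omega : m ≠ 0)
    linarith

theorem one_div_two_le_mul_invH1 {m : ℕ} (hm : 1 ≤ m) {r : ℝ} (hr : 0 < r) :
    1 / 2 ≤ r * invH1 m r := by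
  rcases le_total r 1 with h | h
  · have h1 := inv_pow_div_two_le_invH1 m hr
    have h2 := pow_le_of_le_one hr.le h (by omega : m ≠ 0)
    have h3 : r⁻¹ ≤ (r ^ m)⁻¹ := inv_anti₀ (by positivity) h2
    calc 1 / 2 = r * (r⁻¹ / 2) := by field_simp
      _ ≤ _ := by gcongr; linarith
  · have := pow_div_two_le_invH1 m hr
    have := one_le_pow₀ h (n := m)
    nlinarith

theorem h1f_pos (m : ℕ) {r : ℝ} (hr : 0 < r) : 0 < h1f m r := by
  rw [h1f_eq_inv]; exact inv_pos.2 (invH1_pos m hr)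

theorem h1f_le_two_mul_pow (m : ℕ) {r : ℝ} (hr : 0 < r) : h1f m r ≤ 2 * r ^ m := by
  rw [h1f_eq_inv]
  refine (inv_anti₀ (by positivity) (inv_pow_div_two_le_invH1 m hr)).trans_eq ?_
  field_simp

theorem h1f_le_two_div_pow (m : ℕ) {r : ℝ} (hr : 0 < r) : h1f m r ≤ 2 / r ^ m := by
  rw [h1f_eq_inv]
  refine (inv_anti₀ (by positivity) (pow_div_two_le_invH1 m hr)).trans_eq ?_
  field_simp

theorem continuousOn_h1f (m : ℕ) : ContinuousOn (h1f m) (Ioi 0) := by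
  have : h1f m = fun r => (invH1 m r)⁻¹ := funext (h1f_eq_inv m)
  rw [this]
  exact (contDiffOn_invH1 m subset_rfl).continuousOn.inv₀ fun x hx => (invH1_pos m hx).ne'

theorem integrableOn_h1f_sq_mul_cube {m : ℕ} (hm : 3 ≤ m) :
    IntegrableOn (fun r => h1f m r ^ 2 * r ^ 3) (Ioi 0) := by
  have hc : ContinuousOn (fun r => h1f m r ^ 2 * r ^ 3) (Ioi 0) :=
    ((continuousOn_h1f m).pow 2).mul (by fun_prop)
  rw [← Ioc_union_Ioi_eq_Ioi zero_le_one]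
  refine IntegrableOn.union ?_ ?_
  · refine Integrable.mono' (g := fun _ => 4) (integrable_const 4)
      ((hc.mono Ioc_subset_Ioi_self).aestronglyMeasurable measurableSet_Ioc) ?_
    filter_upwards [ae_restrict_mem measurableSet_Ioc] with r hr
    have h0 := h1f_pos m hr.1
    have h1 := h1f_le_two_mul_pow m hr.1
    have h2 : r ^ m ≤ 1 := pow_le_one₀ hr.1.le hr.2
    have h3 : r ^ 3 ≤ 1 := pow_le_one₀ hr.1.le hr.2
    have h4 : 0 < r ^ 3 := pow_pos hr.1 3
    rw [Real.norm_of_nonneg (by positivity)]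
    calc h1f m r ^ 2 * r ^ 3 ≤ 2 ^ 2 * 1 := by gcongr; linarith
      _ = 4 := by norm_num
  · refine Integrable.mono' (g := fun r : ℝ => 4 * r ^ (-2 : ℝ))
      ((integrableOn_Ioi_rpow_of_lt (by norm_num) one_pos).const_mul 4)
      ((hc.mono (Ioi_subset_Ioi zero_le_one)).aestronglyMeasurable measurableSet_Ioi) ?_
    filter_upwards [ae_restrict_mem measurableSet_Ioi] with r hr
    have hr1 : (1:ℝ) < r := hr
    have hr0 : (0:ℝ) < r := by linarith
    have h0 := h1f_pos m hr0
    have h1 := h1f_le_two_div_pow m hr0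
    have h2 : r ^ 3 ≤ r ^ m := pow_le_pow_right₀ hr1.le hm
    rw [Real.norm_of_nonneg (by positivity), rpow_neg hr0.le, rpow_two]
    calc h1f m r ^ 2 * r ^ 3 ≤ (2 / r ^ 3) ^ 2 * r ^ 3 := by
          gcongr
          exact h1.trans (by gcongr)
      _ = 4 * (r ^ 3)⁻¹ := by field_simp; norm_num
      _ ≤ 4 * (r ^ 2)⁻¹ := by
          gcongr
          · exact hr1.le
          · norm_num

theorem integrableOn_h1f_sq_mul_self {m : ℕ} (hm : 3 ≤ m) :
    IntegrableOn (fun r => h1f m r ^ 2 * r) (Ioi 0) := by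
  have hc : ContinuousOn (fun r => h1f m r ^ 2 * r) (Ioi 0) :=
    ((continuousOn_h1f m).pow 2).mul (by fun_prop)
  rw [← Ioc_union_Ioi_eq_Ioi zero_le_one]
  refine IntegrableOn.union ?_ ?_
  · refine Integrable.mono' (g := fun _ => 4) (integrable_const 4)
      ((hc.mono Ioc_subset_Ioi_self).aestronglyMeasurable measurableSet_Ioc) ?_
    filter_upwards [ae_restrict_mem measurableSet_Ioc] with r hr
    have h0 := h1f_pos m hr.1
    have h1 := h1f_le_two_mul_pow m hr.1
    have h2 : r ^ m ≤ 1 := pow_le_one₀ hr.1.le hr.2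
    have h4 : 0 < r := hr.1
    rw [Real.norm_of_nonneg (by positivity)]
    calc h1f m r ^ 2 * r ≤ 2 ^ 2 * 1 := by gcongr; linarith; exact hr.2
      _ = 4 := by norm_num
  · refine Integrable.mono' ((integrableOn_h1f_sq_mul_cube hm).mono_set
      (Ioi_subset_Ioi zero_le_one))
      ((hc.mono (Ioi_subset_Ioi zero_le_one)).aestronglyMeasurable measurableSet_Ioi) ?_
    filter_upwards [ae_restrict_mem measurableSet_Ioi] with r hr
    have hr1 : (1:ℝ) < r := hr
    rw [Real.norm_of_nonneg (by positivity)]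
    gcongr
    exact le_self_pow₀ hr1.le (by norm_num)

theorem lintegral_Ioc_h1f_sq_le (m : ℕ) (t : ℝ) :
    ∫⁻ s in Ioc 0 t, ENNReal.ofReal (h1f m s ^ 2 * s) ≤ ENNReal.ofReal (4 * (t ^ m) ^ 2 * t ^ 2) := by
  calc _ ≤ ∫⁻ s in Ioc 0 t, ENNReal.ofReal (4 * (t ^ m) ^ 2 * t) := by
        refine setLIntegral_mono (by fun_prop) fun s hs => ENNReal.ofReal_le_ofReal ?_
        have h0 := h1f_pos m hs.1
        have h1 : h1f m s ≤ 2 * t ^ m := (h1f_le_two_mul_pow m hs.1).trans (by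
          have := pow_le_pow_left₀ hs.1.le hs.2 m
          linarith)
        have h2 := hs.1
        calc h1f m s ^ 2 * s ≤ (2 * t ^ m) ^ 2 * t := by gcongr; exact hs.2
          _ = _ := by ring
    _ ≤ _ := by
        rw [setLIntegral_const, Real.volume_Ioc, sub_zero]
        rcases le_total t 0 with ht | ht
        · simp [ENNReal.ofReal_of_nonpos ht]
        · rw [← ENNReal.ofReal_mul (by positivity)]
          apply le_of_eq; congr 1; ring

theorem lintegral_Ici_h1f_sq_le {m : ℕ} (hm : 3 ≤ m) {t : ℝ} (ht : 0 < t) :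
    ∫⁻ s in Ici t, ENNReal.ofReal (h1f m s ^ 2 * s) ≤ ENNReal.ofReal (4 * t ^ 2 / (t ^ m) ^ 2) := by
  have hm' : (3:ℝ) ≤ m := by exact_mod_cast hm
  have hpow (s : ℝ) (hs : 0 < s) (j : ℕ) : s ^ ((j:ℝ) - 2 * m) = s ^ j / (s ^ m) ^ 2 := by
    rw [rpow_sub hs, rpow_natCast, ← pow_mul, ← rpow_natCast s (m * 2)]
    push_cast; rw [mul_comm]
  rw [setLIntegral_congr Ioi_ae_eq_Ici.symm]
  calc _ ≤ ∫⁻ s in Ioi t, ENNReal.ofReal 4 * ENNReal.ofReal (s ^ (1 - 2 * (m:ℝ))) := by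
        refine setLIntegral_mono (by fun_prop) fun s hs => ?_
        have hs0 : 0 < s := ht.trans hs
        rw [← ENNReal.ofReal_mul (by norm_num)]
        apply ENNReal.ofReal_le_ofReal
        have h1 := h1f_le_two_div_pow m hs0
        have h0 := h1f_pos m hs0
        have h3 := hpow s hs0 1
        rw [Nat.cast_one] at h3
        rw [h3]
        calc h1f m s ^ 2 * s ≤ (2 / s ^ m) ^ 2 * s := by gcongr
          _ = _ := by ring
    _ = ENNReal.ofReal 4 * ENNReal.ofReal (-t ^ (1 - 2 * (m:ℝ) + 1) / (1 - 2 * (m:ℝ) + 1)) := by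
        rw [lintegral_const_mul _ (by fun_prop), lintegral_Ioi_rpow_of_lt (by linarith) ht]
    _ ≤ _ := by
        rw [← ENNReal.ofReal_mul (by norm_num)]
        apply ENNReal.ofReal_le_ofReal
        have h3 := hpow t ht 2
        rw [show (1 - 2 * (m:ℝ) + 1) = ((2:ℕ):ℝ) - 2 * m by push_cast; ring, h3, mul_div_assoc 4]
        refine mul_le_mul_of_nonneg_left ?_ (by norm_num)
        rw [neg_div, ← div_neg]
        refine div_le_self (by positivity) ?_
        push_cast; linarith

/-- Total mass of the weight `h₁² ρ dρ`. -/
def h1Mass (m : ℕ) : ℝ := ∫ s in Ioi (0:ℝ), h1f m s ^ 2 * s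

theorem h1Mass_pos {m : ℕ} (hm : 3 ≤ m) : 0 < h1Mass m := by
  have hpos : ∀ s ∈ Ioi (0:ℝ), 0 < h1f m s ^ 2 * s := fun s hs =>
    mul_pos (pow_pos (h1f_pos m hs) 2) hs
  refine (setIntegral_pos_iff_support_of_nonneg_ae ?_ (integrableOn_h1f_sq_mul_self hm)).2 ?_
  · filter_upwards [ae_restrict_mem measurableSet_Ioi] with s hs using (hpos s hs).le
  · have hsub : Ioi (0:ℝ) ⊆ Function.support fun s => h1f m s ^ 2 * s := fun s hs => (hpos s hs).ne'
    rw [inter_eq_right.2 hsub, Real.volume_Ioi]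
    exact ENNReal.zero_lt_top

theorem lintegral_h1f_sq {m : ℕ} (hm : 3 ≤ m) :
    ∫⁻ s in Ioi (0:ℝ), ENNReal.ofReal (h1f m s ^ 2 * s) = ENNReal.ofReal (h1Mass m) := by
  refine (ofReal_integral_eq_lintegral_ofReal (integrableOn_h1f_sq_mul_self hm) ?_).symm
  filter_upwards [ae_restrict_mem measurableSet_Ioi] with s hs
  exact mul_nonneg (sq_nonneg _) (le_of_lt hs)

theorem lintegral_uIoc_h1f_sq_le {m : ℕ} (hm : 3 ≤ m) {ρ t : ℝ} (hρ : 0 < ρ) (ht : 0 < t) :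
    ENNReal.ofReal (invH1 m t) *
      ∫⁻ s in {s | t ∈ uIoc ρ s} ∩ Ioi 0, ENNReal.ofReal (h1f m s ^ 2 * s) ≤
    ENNReal.ofReal ((8 + 2 * h1Mass m) * (ρ * invH1 m ρ) * (t / max ρ t ^ 2)) := by
  have hM := h1Mass_pos hm
  have hvt := invH1_pos m ht
  have hvρ := invH1_pos m hρ
  have htm : 0 < t ^ m := pow_pos ht m
  have hρm : 0 < ρ ^ m := pow_pos hρ m
  set S := {s | t ∈ uIoc ρ s} ∩ Ioi 0 with hS
  have total : ∫⁻ s in S, ENNReal.ofReal (h1f m s ^ 2 * s) ≤ ENNReal.ofReal (h1Mass m) := by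
    rw [← lintegral_h1f_sq hm]
    exact lintegral_mono_set inter_subset_right
  have conclude (X : ℝ) (hX : ∫⁻ s in S, ENNReal.ofReal (h1f m s ^ 2 * s) ≤ ENNReal.ofReal X)
      (h : invH1 m t * X ≤ (8 + 2 * h1Mass m) * (ρ * invH1 m ρ) * (t / max ρ t ^ 2)) :
      ENNReal.ofReal (invH1 m t) * ∫⁻ s in S, ENNReal.ofReal (h1f m s ^ 2 * s) ≤
        ENNReal.ofReal ((8 + 2 * h1Mass m) * (ρ * invH1 m ρ) * (t / max ρ t ^ 2)) :=
    calc _ ≤ ENNReal.ofReal (invH1 m t) * ENNReal.ofReal X := by gcongr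
      _ = ENNReal.ofReal (invH1 m t * X) := (ENNReal.ofReal_mul hvt.le).symm
      _ ≤ _ := ENNReal.ofReal_le_ofReal h
  obtain ⟨k, rfl⟩ : ∃ k, m = k + 3 := ⟨m - 3, by omega⟩
  rcases le_or_gt t ρ with htρ | htρ
  · rw [max_eq_left htρ] at conclude ⊢
    have e : (8 + 2 * h1Mass (k + 3)) * (ρ * invH1 (k + 3) ρ) * (t / ρ ^ 2) =
        (8 + 2 * h1Mass (k + 3)) * (invH1 (k + 3) ρ / ρ) * t := by field_simp
    rw [e] at conclude ⊢
    rcases le_total t 1 with ht1 | ht1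
    · refine conclude _ ((lintegral_mono_set ?_).trans (lintegral_Ioc_h1f_sq_le (k + 3) t)) ?_
      · rintro s ⟨hs, hs0⟩
        refine ⟨hs0, ?_⟩
        rcases mem_uIoc.1 hs with h | h
        · linarith [h.1]
        · exact h.1.le
      · have h1 := div_two_le_invH1 (by omega : 1 ≤ k + 3) hρ
        have h2 : 1 / 2 ≤ invH1 (k + 3) ρ / ρ := by
          rw [le_div_iff₀ hρ]; linarith
        have h3 := invH1_le_inv_pow (k + 3) ht ht1
        calc invH1 (k + 3) t * (4 * (t ^ (k + 3)) ^ 2 * t ^ 2)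
            ≤ (t ^ (k + 3))⁻¹ * (4 * (t ^ (k + 3)) ^ 2 * t ^ 2) := by gcongr
          _ = 4 * t * (t ^ (k + 3) * t) := by field_simp
          _ ≤ 4 * t * 1 := by
              gcongr
              exact mul_le_one₀ (pow_le_one₀ ht.le ht1) ht.le ht1
          _ = 8 * (1 / 2) * t := by ring
          _ ≤ _ := by gcongr; linarith
    · refine conclude _ total ?_
      have h1 := pow_div_two_le_invH1 (k + 3) hρ
      calc invH1 (k + 3) t * h1Mass (k + 3) ≤ t ^ (k + 3) * h1Mass (k + 3) := by
            gcongr; exact invH1_le_pow _ ht1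
        _ = h1Mass (k + 3) * t ^ (k + 2) * t := by ring
        _ ≤ h1Mass (k + 3) * ρ ^ (k + 2) * t := by gcongr
        _ = 2 * h1Mass (k + 3) * (ρ ^ (k + 3) / 2 / ρ) * t := by field_simp; ring
        _ ≤ _ := by gcongr; linarith
  · rw [max_eq_right htρ.le] at conclude ⊢
    rcases le_total t 1 with ht1 | ht1
    · refine conclude _ total ?_
      have h1 := inv_pow_div_two_le_invH1 (k + 3) hρ
      calc invH1 (k + 3) t * h1Mass (k + 3) ≤ (t ^ (k + 3))⁻¹ * h1Mass (k + 3) := by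
            gcongr; exact invH1_le_inv_pow _ ht ht1
        _ = h1Mass (k + 3) * (t ^ (k + 2))⁻¹ * (t / t ^ 2) := by field_simp; ring
        _ ≤ h1Mass (k + 3) * (ρ ^ (k + 2))⁻¹ * (t / t ^ 2) := by gcongr
        _ = 2 * h1Mass (k + 3) * (ρ * ((ρ ^ (k + 3))⁻¹ / 2)) * (t / t ^ 2) := by
            field_simp; ring
        _ ≤ _ := by gcongr; linarith
    · refine conclude _ ((lintegral_mono_set ?_).trans (lintegral_Ici_h1f_sq_le hm ht)) ?_
      · rintro s ⟨hs, hs0⟩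
        rcases mem_uIoc.1 hs with h | h
        · exact h.2
        · linarith [h.2]
      · have h1 := one_div_two_le_mul_invH1 (by omega : 1 ≤ k + 3) hρ
        have h2 : 1 ≤ t ^ k := one_le_pow₀ ht1
        calc invH1 (k + 3) t * (4 * t ^ 2 / (t ^ (k + 3)) ^ 2)
            ≤ t ^ (k + 3) * (4 * t ^ 2 / (t ^ (k + 3)) ^ 2) := by
              gcongr; exact invH1_le_pow _ ht1
          _ = 4 * (t / t ^ 2) / t ^ k := by field_simp; ring
          _ ≤ 4 * (t / t ^ 2) := div_le_self (by positivity) h2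
          _ = 8 * (1 / 2) * (t / t ^ 2) := by ring
          _ ≤ _ := by gcongr; linarith

theorem LocACC.aestronglyMeasurable_L0op {z dz : ℝ → ℂ} (h : LocACC z dz) (m : ℕ) :
    AEStronglyMeasurable (L0op m z dz) (volume.restrict (Ioi 0)) := by
  have hcoef : ContinuousOn (fun ρ : ℝ => (m:ℝ) / ρ * h3f m ρ) (Ioi 0) :=
    (continuousOn_const.div continuousOn_id fun x hx => (ne_of_gt hx)).mul
      (continuousOn_h3f m subset_rfl)
  exact h.aestronglyMeasurable.add
    (((Complex.continuous_ofReal.comp_continuousOn hcoef).mul h.continuousOn).aestronglyMeasurable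
      measurableSet_Ioi)

theorem LocACC.enorm_invH1_smul_sub_le {z dz : ℝ → ℂ} (h : LocACC z dz) (m : ℕ) {ρ s : ℝ}
    (hρ : 0 < ρ) (hs : 0 < s) :
    ‖invH1 m ρ • z ρ - invH1 m s • z s‖ₑ ≤
      ∫⁻ t in uIoc ρ s, ENNReal.ofReal (invH1 m t) * ‖L0op m z dz t‖ₑ := by
  wlog hle : ρ ≤ s generalizing ρ s
  · rw [← enorm_neg, neg_sub, uIoc_comm]
    exact this hs hρ (le_of_not_ge hle)
  rw [← enorm_neg, neg_sub, h.invH1_smul_sub_eq_integral m hρ hle,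
    intervalIntegral.integral_of_le hle, uIoc_of_le hle]
  refine (enorm_integral_le_lintegral_enorm _).trans_eq ?_
  refine setLIntegral_congr_fun measurableSet_Ioc fun t ht => ?_
  rw [enorm_smul, Real.enorm_of_nonneg (invH1_pos m (hρ.trans ht.1)).le]

theorem LocACC.integrableOn_mul_h1f {z dz : ℝ → ℂ} (h : LocACC z dz) {m : ℕ} (hm : 3 ≤ m)
    (hX : IntegrableOn (xDen z dz) (Ioi 0)) :
    IntegrableOn (fun ρ => z ρ * ((h1f m ρ * ρ : ℝ) : ℂ)) (Ioi 0) := by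
  refine Integrable.mono' (hX.add (integrableOn_h1f_sq_mul_cube hm)) ?_ ?_
  · refine (h.continuousOn.mul (Complex.continuous_ofReal.comp_continuousOn
      ((continuousOn_h1f m).mul continuousOn_id))).aestronglyMeasurable measurableSet_Ioi
  · filter_upwards [ae_restrict_mem measurableSet_Ioi] with ρ hρ
    have hρ0 : (0:ℝ) < ρ := hρ
    have hh := h1f_pos m hρ0
    rw [norm_mul, Complex.norm_real, Real.norm_of_nonneg (by positivity)]
    simp only [Pi.add_apply, xDen]
    have e1 : ‖z ρ‖ * (h1f m ρ * ρ) = (‖z ρ‖ / ρ) * (h1f m ρ * ρ) * ρ := by field_simp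
    have e2 : (‖dz ρ‖ ^ 2 + ‖z ρ‖ ^ 2 / ρ ^ 2) * ρ + h1f m ρ ^ 2 * ρ ^ 3 =
        (‖dz ρ‖ ^ 2 + (‖z ρ‖ / ρ) ^ 2 + (h1f m ρ * ρ) ^ 2) * ρ := by ring
    rw [e1, e2]
    gcongr
    nlinarith [sq_nonneg (‖z ρ‖ / ρ - h1f m ρ * ρ), sq_nonneg ‖dz ρ‖,
      sq_nonneg (‖z ρ‖ / ρ), sq_nonneg (h1f m ρ * ρ)]

theorem LocACC.enorm_le_lintegral_kernel {z dz : ℝ → ℂ} (h : LocACC z dz) {m : ℕ} (hm : 3 ≤ m)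
    (hX : IntegrableOn (xDen z dz) (Ioi 0))
    (horth : (∫ ρ in Ioi (0:ℝ), z ρ * ((h1f m ρ * ρ : ℝ) : ℂ)) = 0) {ρ : ℝ} (hρ : 0 < ρ) :
    ENNReal.ofReal (‖z ρ‖ / ρ) ≤ ENNReal.ofReal ((8 + 2 * h1Mass m) / h1Mass m) *
      ∫⁻ t, ENNReal.ofReal (1 / max ρ t ^ 2) * ‖L0op m z dz t‖ₑ ∂radialMeasure := by
  have hM := h1Mass_pos hm
  have hv := invH1_pos m hρ
  have hfm : AEMeasurable (fun t => ‖L0op m z dz t‖ₑ) (volume.restrict (Ioi 0)) :=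
    (h.aestronglyMeasurable_L0op m).enorm
  have hvm : AEMeasurable (fun t => ENNReal.ofReal (invH1 m t)) (volume.restrict (Ioi 0)) :=
    ((contDiffOn_invH1 m subset_rfl).continuousOn.aemeasurable measurableSet_Ioi).ennreal_ofReal
  have hwm : AEMeasurable (fun s => ENNReal.ofReal (h1f m s ^ 2 * s)) (volume.restrict (Ioi 0)) :=
    (integrableOn_h1f_sq_mul_self hm).aemeasurable.ennreal_ofReal
  have hint : ∫ s in Ioi (0:ℝ), (h1f m s ^ 2 * s) • (invH1 m ρ • z ρ - invH1 m s • z s) =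
      h1Mass m • (invH1 m ρ • z ρ) := by
    have e : ∀ s ∈ Ioi (0:ℝ), (h1f m s ^ 2 * s) • (invH1 m ρ • z ρ - invH1 m s • z s) =
        (h1f m s ^ 2 * s) • (invH1 m ρ • z ρ) - z s * ((h1f m s * s : ℝ) : ℂ) := by
      intro s hs
      have hvs := (invH1_pos m hs).ne'
      rw [smul_sub, smul_smul _ _ (z s), h1f_eq_inv]
      congr 1
      rw [Complex.real_smul, mul_comm (z s)]
      congr 2
      field_simp
    rw [setIntegral_congr_fun measurableSet_Ioi e, integral_sub
      ((integrableOn_h1f_sq_mul_self hm).smul_const _) (h.integrableOn_mul_h1f hm hX), horth,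
      sub_zero, integral_smul_const, h1Mass]
  let E : Set (ℝ × ℝ) := {q | q.2 ∈ uIoc ρ q.1}
  have hE : MeasurableSet E := by
    have e : E = {q | min ρ q.1 < q.2} ∩ {q | q.2 ≤ max ρ q.1} := rfl
    rw [e]
    exact (measurableSet_lt (by fun_prop) (by fun_prop)).inter
      (measurableSet_le (by fun_prop) (by fun_prop))
  let G : ℝ × ℝ → ℝ≥0∞ := fun q => ENNReal.ofReal (h1f m q.1 ^ 2 * q.1) *
    (ENNReal.ofReal (invH1 m q.2) * ‖L0op m z dz q.2‖ₑ)
  have main : ENNReal.ofReal (h1Mass m * invH1 m ρ) * ‖z ρ‖ₑ ≤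
      ENNReal.ofReal ((8 + 2 * h1Mass m) * (ρ * invH1 m ρ)) *
        ∫⁻ t, ENNReal.ofReal (1 / max ρ t ^ 2) * ‖L0op m z dz t‖ₑ ∂radialMeasure := by
    calc ENNReal.ofReal (h1Mass m * invH1 m ρ) * ‖z ρ‖ₑ
        = ‖∫ s in Ioi (0:ℝ), (h1f m s ^ 2 * s) • (invH1 m ρ • z ρ - invH1 m s • z s)‖ₑ := by
          rw [hint, smul_smul, enorm_smul, Real.enorm_of_nonneg (by positivity)]
      _ ≤ ∫⁻ s in Ioi (0:ℝ), ENNReal.ofReal (h1f m s ^ 2 * s) *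
            ∫⁻ t in uIoc ρ s, ENNReal.ofReal (invH1 m t) * ‖L0op m z dz t‖ₑ := by
          refine (enorm_integral_le_lintegral_enorm _).trans ?_
          refine setLIntegral_mono' measurableSet_Ioi fun s hs => ?_
          rw [enorm_smul, Real.enorm_of_nonneg (mul_nonneg (sq_nonneg _) (le_of_lt hs))]
          gcongr
          exact h.enorm_invH1_smul_sub_le m hρ hs
      _ = ∫⁻ s in Ioi (0:ℝ), ∫⁻ t in Ioi (0:ℝ), E.indicator G (s, t) := by
          refine setLIntegral_congr_fun measurableSet_Ioi fun s hs => ?_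
          have hsub : uIoc ρ s ⊆ Ioi 0 := fun t ht => (lt_min hρ hs).trans ht.1
          have hind (t : ℝ) : E.indicator G (s, t) = (uIoc ρ s).indicator (fun t => G (s, t)) t := rfl
          simp only [hind]
          rw [lintegral_indicator measurableSet_uIoc, Measure.restrict_restrict measurableSet_uIoc,
            inter_eq_left.2 hsub]
          exact (lintegral_const_mul' _ _ ENNReal.ofReal_ne_top).symm
      _ = ∫⁻ t in Ioi (0:ℝ), ∫⁻ s in Ioi (0:ℝ), E.indicator G (s, t) :=
          lintegral_lintegral_swap ((hwm.comp_fst.mul (hvm.comp_snd.mul hfm.comp_snd)).indicator hE)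
      _ ≤ ∫⁻ t in Ioi (0:ℝ), ENNReal.ofReal ((8 + 2 * h1Mass m) * (ρ * invH1 m ρ)) *
            (ENNReal.ofReal t * (ENNReal.ofReal (1 / max ρ t ^ 2) * ‖L0op m z dz t‖ₑ)) := by
          refine setLIntegral_mono' measurableSet_Ioi fun t ht => ?_
          have ht0 : (0:ℝ) < t := ht
          have hEt : MeasurableSet {s | t ∈ uIoc ρ s} := measurable_prodMk_right hE
          have hind (s : ℝ) :
              E.indicator G (s, t) = {s | t ∈ uIoc ρ s}.indicator (fun s => G (s, t)) s := rfl
          simp only [hind]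
          rw [lintegral_indicator hEt, Measure.restrict_restrict hEt]
          simp only [G]
          rw [lintegral_mul_const'' _ (hwm.mono_measure
              (Measure.restrict_mono inter_subset_right le_rfl))]
          calc _ = (ENNReal.ofReal (invH1 m t) *
                ∫⁻ s in {s | t ∈ uIoc ρ s} ∩ Ioi 0, ENNReal.ofReal (h1f m s ^ 2 * s)) *
                  ‖L0op m z dz t‖ₑ := by ring
            _ ≤ ENNReal.ofReal ((8 + 2 * h1Mass m) * (ρ * invH1 m ρ) * (t / max ρ t ^ 2)) *
                  ‖L0op m z dz t‖ₑ := by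
                gcongr
                exact lintegral_uIoc_h1f_sq_le hm hρ ht0
            _ = _ := by
                rw [div_eq_mul_one_div t, ENNReal.ofReal_mul (by positivity),
                  ENNReal.ofReal_mul ht0.le]
                ring
      _ = _ := by
          rw [lintegral_const_mul'' _ (by fun_prop), lintegral_radialMeasure (by fun_prop)]
  calc ENNReal.ofReal (‖z ρ‖ / ρ)
      = ENNReal.ofReal (1 / (ρ * (h1Mass m * invH1 m ρ))) *
          (ENNReal.ofReal (h1Mass m * invH1 m ρ) * ‖z ρ‖ₑ) := by
        rw [← ofReal_norm, ← ENNReal.ofReal_mul (by positivity),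
          ← ENNReal.ofReal_mul (by positivity)]
        congr 1; field_simp
    _ ≤ _ := mul_le_mul_right main _
    _ = _ := by
        rw [← mul_assoc, ← ENNReal.ofReal_mul (by positivity)]
        congr 2; field_simp

theorem add_rpow_mul_le {p a b r : ℝ} (hp : 0 ≤ p) (ha : 0 ≤ a) (hb : 0 ≤ b) (hr : 0 ≤ r) :
    (a + b) ^ p * r ≤ 2 ^ p * (a ^ p * r + b ^ p * r) := by
  have hmax : (max a b) ^ p ≤ a ^ p + b ^ p := by
    have := Real.rpow_nonneg ha p
    have := Real.rpow_nonneg hb p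
    rcases max_choice a b with h | h <;> rw [h] <;> linarith
  calc (a + b) ^ p * r ≤ (2 * max a b) ^ p * r := by
        gcongr
        linarith [le_max_left a b, le_max_right a b]
    _ = 2 ^ p * (max a b) ^ p * r := by rw [Real.mul_rpow two_pos.le (le_max_of_le_left ha)]
    _ ≤ 2 ^ p * (a ^ p + b ^ p) * r := by gcongr
    _ = _ := by ring

theorem norm_h3f_mul_le (m : ℕ) {ρ : ℝ} (hρ : 0 < ρ) (w : ℂ) :
    ‖(((m : ℝ) / ρ * h3f m ρ : ℝ) : ℂ) * w‖ ≤ m * (‖w‖ / ρ) := by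
  rw [norm_mul, Complex.norm_real, norm_mul, Real.norm_of_nonneg (by positivity : 0 ≤ (m : ℝ) / ρ)]
  calc (m : ℝ) / ρ * ‖h3f m ρ‖ * ‖w‖ ≤ (m : ℝ) / ρ * 1 * ‖w‖ := by
        gcongr
        exact abs_h3f_le_one m hρ
    _ = _ := by ring

theorem norm_L0op_le (m : ℕ) (z dz : ℝ → ℂ) {ρ : ℝ} (hρ : 0 < ρ) :
    ‖L0op m z dz ρ‖ ≤ ‖dz ρ‖ + m * (‖z ρ‖ / ρ) :=
  (norm_add_le _ _).trans (by gcongr; exact norm_h3f_mul_le m hρ _)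

theorem norm_le_norm_L0op_add (m : ℕ) (z dz : ℝ → ℂ) {ρ : ℝ} (hρ : 0 < ρ) :
    ‖dz ρ‖ ≤ ‖L0op m z dz ρ‖ + m * (‖z ρ‖ / ρ) := by
  have e : dz ρ = L0op m z dz ρ - (((m : ℝ) / ρ * h3f m ρ : ℝ) : ℂ) * z ρ := by simp [L0op]
  calc ‖dz ρ‖ ≤ ‖L0op m z dz ρ‖ + ‖(((m : ℝ) / ρ * h3f m ρ : ℝ) : ℂ) * z ρ‖ := by
        conv_lhs => rw [e]
        exact norm_sub_le _ _
    _ ≤ _ := by gcongr; exact norm_h3f_mul_le m hρ _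

theorem LocACC.integrableOn_norm_L0op_rpow {z dz : ℝ → ℂ} (h : LocACC z dz) (m : ℕ) {p : ℝ}
    (hp : 0 ≤ p) (hdz : IntegrableOn (fun ρ => ‖dz ρ‖ ^ p * ρ) (Ioi 0))
    (hz : IntegrableOn (fun ρ => (‖z ρ‖ / ρ) ^ p * ρ) (Ioi 0)) :
    IntegrableOn (fun ρ => ‖L0op m z dz ρ‖ ^ p * ρ) (Ioi 0) := by
  refine Integrable.mono' ((hdz.add (hz.const_mul ((m : ℝ) ^ p))).const_mul (2 ^ p)) ?_ ?_
  · exact (((h.aestronglyMeasurable_L0op m).norm.aemeasurable.pow_const p).mul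
      aemeasurable_id).aestronglyMeasurable
  · filter_upwards [ae_restrict_mem measurableSet_Ioi] with ρ hρ
    have hρ0 : (0:ℝ) < ρ := hρ
    rw [Real.norm_of_nonneg (by positivity)]
    calc ‖L0op m z dz ρ‖ ^ p * ρ ≤ (‖dz ρ‖ + m * (‖z ρ‖ / ρ)) ^ p * ρ := by
          gcongr
          exact norm_L0op_le m z dz hρ0
      _ ≤ 2 ^ p * (‖dz ρ‖ ^ p * ρ + (m * (‖z ρ‖ / ρ)) ^ p * ρ) :=
          add_rpow_mul_le hp (by positivity) (by positivity) hρ0.le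
      _ = _ := by
          rw [Real.mul_rpow (by positivity) (by positivity)]
          simp only [Pi.add_apply]
          ring

/-- Hardy-type control of `z / ρ` by `L₀ z` in `Lᵖ(ρ dρ)`. -/
theorem exists_integral_div_rpow_le {m : ℕ} (hm : 3 ≤ m) {p : ℝ} (hp : 2 ≤ p) :
    ∃ K, 0 < K ∧ ∀ z dz : ℝ → ℂ, LocACC z dz → IntegrableOn (xDen z dz) (Ioi 0) →
      IntegrableOn (fun ρ => (‖z ρ‖ / ρ) ^ p * ρ) (Ioi 0) →
      IntegrableOn (fun ρ => ‖L0op m z dz ρ‖ ^ p * ρ) (Ioi 0) →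
      (∫ ρ in Ioi (0:ℝ), z ρ * ((h1f m ρ * ρ : ℝ) : ℂ)) = 0 →
      ∫ ρ in Ioi (0:ℝ), (‖z ρ‖ / ρ) ^ p * ρ ≤
        K * ∫ ρ in Ioi (0:ℝ), ‖L0op m z dz ρ‖ ^ p * ρ := by
  obtain ⟨K, hK, hardy⟩ := exists_hardy_bound hp
  have hp0 : 0 ≤ p := by linarith
  have hM := h1Mass_pos hm
  set D := (8 + 2 * h1Mass m) / h1Mass m with hD_def
  have hD : 0 < D := by positivity
  refine ⟨D ^ p * K, by positivity, fun z dz h hX hz hL horth => ?_⟩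
  have nonneg (u : ℝ → ℝ) (hu : ∀ ρ, 0 < ρ → 0 ≤ u ρ) :
      0 ≤ᵐ[volume.restrict (Ioi 0)] fun ρ => u ρ ^ p * ρ := by
    filter_upwards [ae_restrict_mem measurableSet_Ioi] with ρ hρ
    exact mul_nonneg (Real.rpow_nonneg (hu ρ hρ) p) (le_of_lt hρ)
  have hfm := (h.aestronglyMeasurable_L0op m).enorm
  have hA : ∫⁻ t, ‖L0op m z dz t‖ₑ ^ p ∂radialMeasure =
      ENNReal.ofReal (∫ ρ in Ioi (0:ℝ), ‖L0op m z dz ρ‖ ^ p * ρ) := by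
    rw [ofReal_integral_eq_lintegral_ofReal hL (nonneg _ fun _ _ => norm_nonneg _),
      lintegral_radialMeasure (hfm.pow_const p)]
    refine setLIntegral_congr_fun measurableSet_Ioi fun ρ hρ => ?_
    rw [ENNReal.ofReal_mul (by positivity), mul_comm, ← ENNReal.ofReal_rpow_of_nonneg
      (norm_nonneg _) hp0, ofReal_norm]
  have hzm : AEMeasurable (fun ρ => ENNReal.ofReal (‖z ρ‖ / ρ)) (volume.restrict (Ioi 0)) :=
    ((h.continuousOn.aemeasurable measurableSet_Ioi).norm.div aemeasurable_id).ennreal_ofReal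
  have hB : ENNReal.ofReal (∫ ρ in Ioi (0:ℝ), (‖z ρ‖ / ρ) ^ p * ρ) =
      ∫⁻ ρ, ENNReal.ofReal (‖z ρ‖ / ρ) ^ p ∂radialMeasure := by
    rw [ofReal_integral_eq_lintegral_ofReal hz
      (nonneg _ fun ρ hρ => div_nonneg (norm_nonneg _) hρ.le),
      lintegral_radialMeasure (hzm.pow_const p)]
    refine setLIntegral_congr_fun measurableSet_Ioi fun ρ hρ => ?_
    have hρ0 : (0:ℝ) < ρ := hρ
    rw [ENNReal.ofReal_mul (by positivity), mul_comm, ENNReal.ofReal_rpow_of_nonneg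
      (by positivity) hp0]
  have hA0 : 0 ≤ ∫ ρ in Ioi (0:ℝ), ‖L0op m z dz ρ‖ ^ p * ρ :=
    integral_nonneg_of_ae (nonneg _ fun _ _ => norm_nonneg _)
  refine (ENNReal.ofReal_le_ofReal_iff (by positivity)).1 ?_
  calc ENNReal.ofReal (∫ ρ in Ioi (0:ℝ), (‖z ρ‖ / ρ) ^ p * ρ)
      = ∫⁻ ρ, ENNReal.ofReal (‖z ρ‖ / ρ) ^ p ∂radialMeasure := hB
    _ ≤ ∫⁻ ρ, ENNReal.ofReal D ^ p * (∫⁻ t, ENNReal.ofReal (1 / max ρ t ^ 2) *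
          ‖L0op m z dz t‖ₑ ∂radialMeasure) ^ p ∂radialMeasure := by
        refine lintegral_mono_ae ?_
        filter_upwards [ae_radialMeasure_pos] with ρ hρ
        rw [← ENNReal.mul_rpow_of_nonneg _ _ hp0]
        exact ENNReal.rpow_le_rpow (h.enorm_le_lintegral_kernel hm hX horth hρ) hp0
    _ = ENNReal.ofReal D ^ p * ∫⁻ ρ, (∫⁻ t, ENNReal.ofReal (1 / max ρ t ^ 2) *
          ‖L0op m z dz t‖ₑ ∂radialMeasure) ^ p ∂radialMeasure :=
        lintegral_const_mul' _ _ (ENNReal.rpow_ne_top_of_nonneg hp0 ENNReal.ofReal_ne_top)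
    _ ≤ ENNReal.ofReal D ^ p * (ENNReal.ofReal K *
          ENNReal.ofReal (∫ ρ in Ioi (0:ℝ), ‖L0op m z dz ρ‖ ^ p * ρ)) := by
        rw [← hA]
        gcongr
        exact hardy _ hfm
    _ = _ := by
        rw [ENNReal.ofReal_rpow_of_nonneg hD.le hp0, ← ENNReal.ofReal_mul hK.le,
          ← ENNReal.ofReal_mul (by positivity), mul_assoc]

/-- **Coercivity of L₀ under orthogonality to h₁ (Lᵖ version).** For m ≥ 3 and
2 ≤ p < ∞ there is C = C(m,p) such that if z has finite X-norm, z' and z/ρ lie in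
Lᵖ(ρ dρ), and ∫ z h₁ ρ dρ = 0, then ‖|z'| + |z|/ρ‖_{Lᵖ(ρ dρ)} ≤ C ‖L₀z‖_{Lᵖ(ρ dρ)}. -/
theorem statement10 (m : ℕ) (hm : 3 ≤ m) (p : ℝ) (hp : 2 ≤ p) :
    ∃ C > (0:ℝ), ∀ z dz : ℝ → ℂ,
      LocACC z dz →
      IntegrableOn (xDen z dz) (Ioi (0:ℝ)) →
      IntegrableOn (fun ρ => ‖dz ρ‖ ^ p * ρ) (Ioi (0:ℝ)) →
      IntegrableOn (fun ρ => (‖z ρ‖ / ρ) ^ p * ρ) (Ioi (0:ℝ)) →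
      (∫ ρ in Ioi (0:ℝ), z ρ * ((h1f m ρ * ρ : ℝ) : ℂ)) = 0 →
      (∫ ρ in Ioi (0:ℝ), (‖dz ρ‖ + ‖z ρ‖ / ρ) ^ p * ρ) ^ (1 / p)
        ≤ C * (∫ ρ in Ioi (0:ℝ), ‖L0op m z dz ρ‖ ^ p * ρ) ^ (1 / p) := by
  obtain ⟨K, hK, hardy⟩ := exists_integral_div_rpow_le hm hp
  have hp0 : 0 ≤ p := by linarith
  refine ⟨(2 ^ p * (1 + (m + 1 : ℝ) ^ p * K)) ^ (1 / p), by positivity,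
    fun z dz h hX hdz hz horth => ?_⟩
  have hL := h.integrableOn_norm_L0op_rpow m hp0 hdz hz
  have hzL := hardy z dz h hX hz hL horth
  have hA0 : 0 ≤ ∫ ρ in Ioi (0:ℝ), ‖L0op m z dz ρ‖ ^ p * ρ :=
    setIntegral_nonneg measurableSet_Ioi fun ρ hρ =>
      mul_nonneg (Real.rpow_nonneg (norm_nonneg _) p) (le_of_lt hρ)
  have nonneg : ∀ ρ ∈ Ioi (0:ℝ), 0 ≤ (‖dz ρ‖ + ‖z ρ‖ / ρ) ^ p * ρ := fun ρ hρ => by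
    have hρ0 : (0:ℝ) < ρ := hρ
    positivity
  rw [← Real.mul_rpow (by positivity) hA0]
  refine Real.rpow_le_rpow (setIntegral_nonneg measurableSet_Ioi nonneg) ?_ (by positivity)
  calc ∫ ρ in Ioi (0:ℝ), (‖dz ρ‖ + ‖z ρ‖ / ρ) ^ p * ρ
      ≤ ∫ ρ in Ioi (0:ℝ), 2 ^ p * (‖L0op m z dz ρ‖ ^ p * ρ +
          (m + 1 : ℝ) ^ p * ((‖z ρ‖ / ρ) ^ p * ρ)) := by
        refine integral_mono_of_nonneg ?_ ((hL.add (hz.const_mul _)).const_mul _) ?_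
        · filter_upwards [ae_restrict_mem measurableSet_Ioi] with ρ hρ using nonneg ρ hρ
        · filter_upwards [ae_restrict_mem measurableSet_Ioi] with ρ hρ
          have hρ0 : (0:ℝ) < ρ := hρ
          calc (‖dz ρ‖ + ‖z ρ‖ / ρ) ^ p * ρ
              ≤ (‖L0op m z dz ρ‖ + (m + 1) * (‖z ρ‖ / ρ)) ^ p * ρ := by
                gcongr ?_ ^ p * ρ
                linarith [norm_le_norm_L0op_add m z dz hρ0]
            _ ≤ 2 ^ p * (‖L0op m z dz ρ‖ ^ p * ρ + ((m + 1) * (‖z ρ‖ / ρ)) ^ p * ρ) :=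
                add_rpow_mul_le hp0 (by positivity) (by positivity) hρ0.le
            _ = _ := by
                rw [Real.mul_rpow (by positivity) (by positivity), mul_assoc]
    _ = 2 ^ p * ((∫ ρ in Ioi (0:ℝ), ‖L0op m z dz ρ‖ ^ p * ρ) +
          (m + 1 : ℝ) ^ p * ∫ ρ in Ioi (0:ℝ), (‖z ρ‖ / ρ) ^ p * ρ) := by
        rw [integral_const_mul, integral_add hL (hz.const_mul _), integral_const_mul]
    _ ≤ 2 ^ p * ((∫ ρ in Ioi (0:ℝ), ‖L0op m z dz ρ‖ ^ p * ρ) +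
          (m + 1 : ℝ) ^ p * (K * ∫ ρ in Ioi (0:ℝ), ‖L0op m z dz ρ‖ ^ p * ρ)) := by
        gcongr
    _ = _ := by ring

end
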